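/- Let H be a Hopf monoid in a braided monoidal category C, δ a character and σ a cocharacter of H. Then the following are equivalent: (i) δ ∘ σ = id_𝟙 and σ ∘ δ = ((m ∘ (S ⊗ m)) ⊗ δ) ∘ (ψ_{H⊗H,H} ⊗ 1_H) ∘ (1_{H⊗H} ⊗ ψ_{H,H}) ∘ (σ ⊗ Δ²) as morphisms H → H (suppressing unitors/associators), where Δ² := (1_H ⊗ Δ) ∘ Δ — i.e. the unit object 𝟙, with right action given by δ and left coaction given by σ, is a braided stable anti-Yetter–Drinfeld module over H; (ii) (δ, σ) is a braided modular pair in involution, i.e. δ ∘ σ = id_𝟙 and the morphism H → H given (suppressing unitors) by m ∘ (m ⊗ 1_H) ∘ ((S ∘ σ) ⊗ (S̃ ∘ S̃) ⊗ σ) equals id_H. -/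

import Mathlib

open CategoryTheory MonoidalCategory

universe v u

/-- A Hopf algebra object (a "braided Hopf algebra") in a braided monoidal category `C`,
consisting of an object `X` with multiplication `mul`, unit `one`, comultiplication
`comul`, counit `counit` and antipode `antipode`, satisfying the usual axioms, with
the compatibility of `mul` and `comul` expressed via the braiding. -/
structure HopfObj (C : Type u) [Category.{v} C] [MonoidalCategory C]
    [BraidedCategory C] where
  X : C
  mul : X ⊗ X ⟶ X
  one : 𝟙_ C ⟶ X
  comul : X ⟶ X ⊗ X
  counit : X ⟶ 𝟙_ C
  antipode : X ⟶ X
  mul_assoc : (mul ▷ X) ≫ mul = (α_ X X X).hom ≫ (X ◁ mul) ≫ mul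
  one_mul : (one ▷ X) ≫ mul = (λ_ X).hom
  mul_one : (X ◁ one) ≫ mul = (ρ_ X).hom
  comul_assoc : comul ≫ (comul ▷ X) ≫ (α_ X X X).hom = comul ≫ (X ◁ comul)
  counit_comul : comul ≫ (counit ▷ X) = (λ_ X).inv
  comul_counit : comul ≫ (X ◁ counit) = (ρ_ X).inv
  mul_comul : mul ≫ comul =
      (comul ⊗ₘ comul) ≫ (α_ X X (X ⊗ X)).hom ≫ (X ◁ (α_ X X X).inv) ≫
        (X ◁ ((β_ X X).hom ▷ X)) ≫ (X ◁ (α_ X X X).hom) ≫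
        (α_ X X (X ⊗ X)).inv ≫ (mul ⊗ₘ mul)
  one_comul : one ≫ comul = (λ_ (𝟙_ C)).inv ≫ (one ⊗ₘ one)
  mul_counit : mul ≫ counit = (counit ⊗ₘ counit) ≫ (λ_ (𝟙_ C)).hom
  one_counit : one ≫ counit = 𝟙 (𝟙_ C)
  antipode_left : comul ≫ (antipode ▷ X) ≫ mul = counit ≫ one
  antipode_right : comul ≫ (X ◁ antipode) ≫ mul = counit ≫ one

variable {C : Type u} [Category.{v} C] [MonoidalCategory C] [BraidedCategory C]

/-- The `δ`-twisted antipode `S̃ = λ_H ∘ (δ ⊗ S) ∘ Δ`. -/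
def HopfObj.twist (A : _root_.HopfObj C) (δ : A.X ⟶ 𝟙_ C) : A.X ⟶ A.X :=
  A.comul ≫ (δ ⊗ₘ A.antipode) ≫ (λ_ A.X).hom

/-- `δ : H ⟶ 𝟙` is a character, i.e. a morphism of monoid objects. -/
def HopfObj.IsCharacter (A : _root_.HopfObj C) (δ : A.X ⟶ 𝟙_ C) : Prop :=
  A.mul ≫ δ = (δ ⊗ₘ δ) ≫ (λ_ (𝟙_ C)).hom ∧ A.one ≫ δ = 𝟙 (𝟙_ C)

/-- `σ : 𝟙 ⟶ H` is a cocharacter, i.e. a morphism of comonoid objects. -/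
def HopfObj.IsCocharacter (A : _root_.HopfObj C) (σ : 𝟙_ C ⟶ A.X) : Prop :=
  σ ≫ A.comul = (λ_ (𝟙_ C)).inv ≫ (σ ⊗ₘ σ) ∧ σ ≫ A.counit = 𝟙 (𝟙_ C)

/-- The morphism `m ∘ (m ⊗ 1_H) ∘ ((S ∘ σ) ⊗ (S̃ ∘ S̃) ⊗ σ) : H ⟶ H`
(with unitors inserted). -/
def HopfObj.bmpiMap (A : _root_.HopfObj C) (δ : A.X ⟶ 𝟙_ C) (σ : 𝟙_ C ⟶ A.X) :
    A.X ⟶ A.X :=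
  (λ_ A.X).inv ≫ ((σ ≫ A.antipode) ⊗ₘ (A.twist δ ≫ A.twist δ)) ≫
    (ρ_ (A.X ⊗ A.X)).inv ≫ ((A.X ⊗ A.X) ◁ σ) ≫ (A.mul ▷ A.X) ≫ A.mul

/-- `(δ, σ)` is a braided modular pair in involution. -/
def HopfObj.IsBMPI (A : _root_.HopfObj C) (δ : A.X ⟶ 𝟙_ C) (σ : 𝟙_ C ⟶ A.X) : Prop :=
  σ ≫ δ = 𝟙 (𝟙_ C) ∧ A.bmpiMap δ σ = 𝟙 A.X

/-!
Let `∗` be convolution on endomorphisms of `H` and `⋆` convolution along the co-opposite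
comultiplication `β ∘ Δ`. An antimultiplicative map `t` satisfies `t ∘ (f ∗ g) = (t ∘ g) ⋆ (t ∘ f)`,
and both `S` and `S̃` are antimultiplicative. Applying `S̃` to `S̃ ∗ id = η ∘ δ` gives
`S̃ ⋆ S̃² = η ∘ δ`, hence `σ ∘ δ = S̃ ⋆ S̃² ⋆ s` with `s = σ ∘ ε`, while the anti-Yetter–Drinfeld
condition reads `σ ∘ δ = S̃ ⋆ s ⋆ id`. As `S̃` is left `⋆`-invertible, the condition becomes
`S̃² ⋆ s = s ⋆ id`; multiplying by the `⋆`-inverse `S ∘ s` of `s` turns it into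
`(S ∘ s) ⋆ S̃² ⋆ s = id`, which is the involution condition.
-/

namespace BraidedModularPair

open scoped MonObj ComonObj
open scoped CategoryTheory.HopfObj
open CategoryTheory.HopfObj (mul_antipode one_antipode antipode_left antipode_right)

section Unitors

variable {D : Type u} [Category.{v} D] [MonoidalCategory D]

theorem associator_inv_comp_rightUnitor {X Y Z W : D} (δ : W ⟶ 𝟙_ D) :
    (α_ X Y (Z ⊗ W)).inv ≫ (α_ (X ⊗ Y) Z W).inv ≫ ((X ⊗ Y) ⊗ Z) ◁ δ ≫ (ρ_ _).hom =
      X ◁ Y ◁ (Z ◁ δ ≫ (ρ_ Z).hom) ≫ (α_ X Y Z).inv := by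
  monoidal

theorem leftUnitor_inv_comp_associator_inv {V W X Y Z : D} (σ : 𝟙_ D ⟶ V)
    (c : X ⟶ Y ⊗ Z) (p : Z ⟶ W) :
    (λ_ X).inv ≫ (σ ⊗ₘ (c ≫ Y ◁ p)) ≫ (α_ V Y W).inv =
      c ≫ (((λ_ Y).inv ≫ σ ▷ Y) ⊗ₘ p) := by
  rw [MonoidalCategory.tensorHom_def', Category.assoc, ← leftUnitor_inv_naturality_assoc,
    MonoidalCategory.tensorHom_def']
  simp

end Unitors

section Convolution

variable {D : Type u} [Category.{v} D] [MonoidalCategory D]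
  {M N P : D} [ComonObj M] [MonObj N] [MonObj P]

/-- The convolution product `m ∘ (f ⊗ g) ∘ Δ`, with unit `η ∘ ε`: the product of Mathlib's
convolution monoid `Conv M N`, as an operation on morphisms `M ⟶ N`. -/
def convMul (f g : M ⟶ N) : M ⟶ N :=
  Mul.mul (α := Conv M N) f g

local infixl:70 " ∗ " => convMul

theorem convMul_def (f g : M ⟶ N) : f ∗ g = Δ ≫ (f ⊗ₘ g) ≫ μ := by
  rw [MonoidalCategory.tensorHom_def, Category.assoc]
  rfl

theorem convMul_assoc (f g h : M ⟶ N) : f ∗ g ∗ h = f ∗ (g ∗ h) :=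
  mul_assoc (G := Conv M N) f g h

theorem convMul_one (f : M ⟶ N) : f ∗ (ε ≫ η) = f :=
  mul_one (M := Conv M N) f

theorem one_convMul (f : M ⟶ N) : (ε ≫ η) ∗ f = f :=
  one_mul (M := Conv M N) f

theorem convMul_counit_comp (f : M ⟶ N) (x : 𝟙_ D ⟶ N) :
    f ∗ (ε ≫ x) = (ρ_ M).inv ≫ (f ⊗ₘ x) ≫ μ := by
  rw [convMul_def, ← ComonObj.comul_counit, ← id_tensorHom, Category.assoc,
    tensorHom_comp_tensorHom_assoc, Category.id_comp]

theorem counit_comp_convMul (x : 𝟙_ D ⟶ N) (f : M ⟶ N) :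
    (ε ≫ x) ∗ f = (λ_ M).inv ≫ (x ⊗ₘ f) ≫ μ := by
  rw [convMul_def, ← ComonObj.counit_comul, ← tensorHom_id, Category.assoc,
    tensorHom_comp_tensorHom_assoc, Category.id_comp]

theorem comp_one_convMul_counit_comp (δ : M ⟶ 𝟙_ D) (x : 𝟙_ D ⟶ N) :
    (δ ≫ η) ∗ (ε ≫ x) = δ ≫ x := by
  rw [convMul_counit_comp, ← Category.id_comp x, ← tensorHom_comp_tensorHom_assoc, tensorHom_id,
    MonObj.one_mul_hom, unitors_equal, rightUnitor_naturality_assoc, Iso.inv_hom_id_assoc,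
    Category.id_comp]

theorem convMul_comp (f g : M ⟶ N) (t : N ⟶ P) [IsMonHom t] :
    (f ∗ g) ≫ t = (f ≫ t) ∗ (g ≫ t) := by
  simp only [convMul_def, Category.assoc, IsMonHom.mul_hom, tensorHom_comp_tensorHom_assoc]

instance isMonHom_one : IsMonHom η[N] where
  mul_hom := by simp [unitors_equal]

/-- The map `h ↦ δ(h₁) h₂` attached to a functional `δ`. -/
def translate (δ : M ⟶ 𝟙_ D) : M ⟶ M :=
  Δ ≫ δ ▷ M ≫ (λ_ M).hom

theorem translate_comp (δ : M ⟶ 𝟙_ D) (f : M ⟶ N) :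
    translate δ ≫ f = (δ ≫ η) ∗ f := by
  have one_mul_f : ((δ ≫ η[N]) ⊗ₘ f) ≫ μ = δ ▷ M ≫ (λ_ M).hom ≫ f := by
    rw [← MonObj.one_mul_hom, ← tensorHom_id, tensorHom_comp_tensorHom_assoc, Category.id_comp]
  rw [convMul_def, one_mul_f, translate, Category.assoc, Category.assoc]

end Convolution

local infixl:70 " ∗ " => convMul

section CoopConvolution

theorem braiding_whiskerRight_comp_tensorHom {X Y X' Y' Z W : C} (f : X ⟶ X') (g : Y ⟶ Y')
    (k : Y' ⊗ X' ⟶ W) (δ : Z ⟶ 𝟙_ C) :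
    (β_ X Y).hom ▷ Z ≫ (((g ⊗ₘ f) ≫ k) ⊗ₘ δ) ≫ (ρ_ W).hom =
      (X ⊗ Y) ◁ δ ≫ (ρ_ (X ⊗ Y)).hom ≫ (f ⊗ₘ g) ≫ (β_ X' Y').hom ≫ k := by
  rw [MonoidalCategory.tensorHom_def', Category.assoc, ← whisker_exchange_assoc,
    rightUnitor_naturality, rightUnitor_naturality_assoc,
    BraidedCategory.braiding_naturality_assoc]

/-- The co-opposite comonoid `(M, β ∘ Δ, ε)`; it is not an instance, since it lives on the same
object `M`. -/
abbrev coopComonObj (M : C) [ComonObj M] : ComonObj M where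
  counit := ε
  comul := Δ ≫ (β_ M M).hom
  counit_comul := by
    rw [Category.assoc, ← BraidedCategory.braiding_naturality_right, ComonObj.comul_counit_assoc]
    simp
  comul_counit := by
    rw [Category.assoc, ← BraidedCategory.braiding_naturality_left, ComonObj.counit_comul_assoc]
    simp
  comul_assoc := by
    simp only [Category.assoc, whiskerLeft_comp, comp_whiskerRight,
      ← BraidedCategory.braiding_naturality_left_assoc,
      ← BraidedCategory.braiding_naturality_right_assoc]
    rw [ComonObj.comul_assoc_assoc, BraidedCategory.braiding_tensor_left_hom,
      BraidedCategory.braiding_tensor_right_hom]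
    simp only [Category.assoc, Iso.inv_hom_id, Category.comp_id]

variable {M N P : C} [ComonObj M] [MonObj N] [MonObj P]

/-- The convolution product along the co-opposite comultiplication `β ∘ Δ`; its unit is again
`η ∘ ε`. -/
def coopConvMul (f g : M ⟶ N) : M ⟶ N :=
  letI := coopComonObj M
  f ∗ g

local infixl:70 " ⋆ " => coopConvMul

theorem coopConvMul_def (f g : M ⟶ N) : f ⋆ g = Δ ≫ (β_ M M).hom ≫ (f ⊗ₘ g) ≫ μ :=
  (@convMul_def _ _ _ M N (coopComonObj M) _ f g).trans (Category.assoc _ _ _)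

theorem coopConvMul_assoc (f g h : M ⟶ N) : f ⋆ g ⋆ h = f ⋆ (g ⋆ h) :=
  @convMul_assoc _ _ _ M N (coopComonObj M) _ f g h

theorem one_coopConvMul (f : M ⟶ N) : (ε ≫ η) ⋆ f = f :=
  @one_convMul _ _ _ M N (coopComonObj M) _ f

theorem coopConvMul_counit_comp (f : M ⟶ N) (x : 𝟙_ C ⟶ N) :
    f ⋆ (ε ≫ x) = (ρ_ M).inv ≫ (f ⊗ₘ x) ≫ μ :=
  @convMul_counit_comp _ _ _ M N (coopComonObj M) _ f x

theorem counit_comp_coopConvMul (x : 𝟙_ C ⟶ N) (f : M ⟶ N) :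
    (ε ≫ x) ⋆ f = (λ_ M).inv ≫ (x ⊗ₘ f) ≫ μ :=
  @counit_comp_convMul _ _ _ M N (coopComonObj M) _ x f

theorem counit_comp_coopConvMul_coopConvMul (s t : 𝟙_ C ⟶ N) (f : M ⟶ N) :
    (ε ≫ s) ⋆ f ⋆ (ε ≫ t) =
      (λ_ M).inv ≫ (s ⊗ₘ f) ≫ (ρ_ (N ⊗ N)).inv ≫ (N ⊗ N) ◁ t ≫ μ ▷ N ≫ μ := by
  rw [counit_comp_coopConvMul, coopConvMul_counit_comp, whisker_exchange_assoc,
    ← rightUnitor_inv_naturality_assoc, MonoidalCategory.tensorHom_def (_ ≫ _), Category.assoc,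
    ← rightUnitor_inv_naturality_assoc]
  simp only [Category.assoc]

theorem comp_one_coopConvMul_counit_comp (δ : M ⟶ 𝟙_ C) (x : 𝟙_ C ⟶ N) :
    (δ ≫ η) ⋆ (ε ≫ x) = δ ≫ x :=
  @comp_one_convMul_counit_comp _ _ _ M N (coopComonObj M) _ δ x

theorem coopConvMul_right_inj_of_eq_one {a b : M ⟶ N} (hab : a ⋆ b = ε ≫ η) {f g : M ⟶ N} :
    b ⋆ f = b ⋆ g ↔ f = g := by
  refine ⟨fun h => ?_, congrArg _⟩
  rw [← one_coopConvMul f, ← one_coopConvMul g, ← hab, coopConvMul_assoc, coopConvMul_assoc, h]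

theorem comul_braiding_whiskerLeft (δ : M ⟶ 𝟙_ C) :
    Δ ≫ (β_ M M).hom ≫ M ◁ δ ≫ (ρ_ M).hom = translate δ := by
  rw [← BraidedCategory.braiding_naturality_left_assoc, braiding_tensorUnit_left]
  simp [translate]

theorem convMul_comp_of_antimultiplicative {t : N ⟶ P}
    (ht : μ ≫ t = (t ⊗ₘ t) ≫ (β_ P P).hom ≫ μ) (f g : M ⟶ N) :
    (f ∗ g) ≫ t = (g ≫ t) ⋆ (f ≫ t) := by
  simp only [coopConvMul_def, convMul_def, Category.assoc, ht, tensorHom_comp_tensorHom_assoc,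
    BraidedCategory.braiding_naturality_assoc]

theorem comp_convMul_of_anticomultiplicative {L : C} [ComonObj L] {u : L ⟶ M}
    (hu : u ≫ Δ = Δ ≫ (β_ L L).hom ≫ (u ⊗ₘ u)) (f g : M ⟶ N) :
    u ≫ (f ∗ g) = (u ≫ f) ⋆ (u ≫ g) := by
  simp only [coopConvMul_def, convMul_def, reassoc_of% hu, tensorHom_comp_tensorHom_assoc]

end CoopConvolution

local infixl:70 " ⋆ " => coopConvMul

section TwistedAntipode

instance isMonHom_comul (B : C) [BimonObj B] : IsMonHom Δ[B] where
  one_hom := BimonObj.one_comul B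
  mul_hom := by rw [BimonObj.mul_comul, MonObj.tensorObj.mul_def]

instance isMonHom_translate {B : C} [BimonObj B] (δ : B ⟶ 𝟙_ C) [IsMonHom δ] :
    IsMonHom (translate δ) := by
  unfold translate
  infer_instance

variable {H : C} [CategoryTheory.HopfObj H]

theorem antipode_convMul_id : 𝒮 ∗ 𝟙 H = ε ≫ η := by
  rw [convMul_def, tensorHom_id, antipode_left]

theorem id_convMul_antipode : 𝟙 H ∗ 𝒮 = ε ≫ η := by
  rw [convMul_def, id_tensorHom, antipode_right]

/-- The twisted antipode `h ↦ δ(h₁) S(h₂)`. -/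
def twistedAntipode (δ : H ⟶ 𝟙_ C) : H ⟶ H :=
  Δ ≫ (δ ⊗ₘ 𝒮) ≫ (λ_ H).hom

theorem translate_antipode (δ : H ⟶ 𝟙_ C) : translate δ ≫ 𝒮 = twistedAntipode δ := by
  simp [twistedAntipode, translate, MonoidalCategory.tensorHom_def]

theorem twistedAntipode_convMul_id (δ : H ⟶ 𝟙_ C) : twistedAntipode δ ∗ 𝟙 H = δ ≫ η := by
  rw [← translate_antipode, translate_comp, convMul_assoc, antipode_convMul_id, convMul_one]

variable (δ : H ⟶ 𝟙_ C) [IsMonHom δ]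

theorem mul_twistedAntipode :
    μ ≫ twistedAntipode δ =
      (twistedAntipode δ ⊗ₘ twistedAntipode δ) ≫ (β_ H H).hom ≫ μ := by
  rw [← translate_antipode, IsMonHom.mul_hom_assoc, mul_antipode, tensorHom_comp_tensorHom_assoc]

theorem one_twistedAntipode : η ≫ twistedAntipode δ = η := by
  rw [← translate_antipode, IsMonHom.one_hom_assoc, one_antipode]

theorem twistedAntipode_coopConvMul_sq :
    twistedAntipode δ ⋆ (twistedAntipode δ ≫ twistedAntipode δ) = δ ≫ η := by
  have h := convMul_comp_of_antimultiplicative (mul_twistedAntipode δ) (twistedAntipode δ) (𝟙 H)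
  rw [Category.id_comp, twistedAntipode_convMul_id, Category.assoc, one_twistedAntipode] at h
  exact h.symm

theorem character_convMul_antipode_comp : (δ ≫ η) ∗ (𝒮 ≫ δ ≫ η) = ε ≫ η[H] := by
  have h := convMul_comp (𝟙 H) 𝒮 (δ ≫ η[H])
  rw [id_convMul_antipode, Category.id_comp, Category.assoc, IsMonHom.one_hom] at h
  exact h.symm

theorem exists_coopConvMul_twistedAntipode_eq_one :
    ∃ f : H ⟶ H, f ⋆ twistedAntipode δ = ε ≫ η := by
  refine ⟨(𝒮 ∗ (𝒮 ≫ δ ≫ η)) ≫ 𝒮, ?_⟩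
  have translate_inv : translate δ ∗ (𝒮 ∗ (𝒮 ≫ δ ≫ η)) = ε ≫ η := by
    rw [← Category.comp_id (translate δ), translate_comp, convMul_assoc, ← convMul_assoc (𝟙 H),
      id_convMul_antipode, one_convMul, character_convMul_antipode_comp]
  rw [← translate_antipode, ← convMul_comp_of_antimultiplicative (mul_antipode H), translate_inv,
    Category.assoc, one_antipode]

end TwistedAntipode

section Cocharacter

attribute [local instance] ComonObj.instTensorUnit

theorem counit_comp_anticomultiplicative {M N : C} [ComonObj M] [ComonObj N] (σ : 𝟙_ C ⟶ N)
    [IsComonHom σ] :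
    (ε[M] ≫ σ) ≫ Δ = Δ ≫ (β_ M M).hom ≫ ((ε ≫ σ) ⊗ₘ (ε ≫ σ)) := by
  have counit_counit : Δ ≫ (ε[M] ⊗ₘ ε[M]) = ε ≫ (λ_ (𝟙_ C)).inv := by
    rw [MonoidalCategory.tensorHom_def, ComonObj.counit_comul_assoc, leftUnitor_inv_naturality]
  rw [Category.assoc, IsComonHom.hom_comul, ← tensorHom_comp_tensorHom,
    ← BraidedCategory.braiding_naturality_assoc, reassoc_of% counit_counit,
    ComonObj.instTensorUnit_comul]
  simp [← unitors_equal]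

variable {H : C} [CategoryTheory.HopfObj H] (σ : 𝟙_ C ⟶ H) [IsComonHom σ]

theorem cocharacter_coopConvMul_antipode :
    (ε[H] ≫ σ) ⋆ (ε ≫ σ ≫ 𝒮) = ε ≫ η := by
  have h := comp_convMul_of_anticomultiplicative
    (counit_comp_anticomultiplicative (M := H) σ) (𝟙 H) 𝒮
  rw [id_convMul_antipode] at h
  simpa using h.symm

theorem antipode_coopConvMul_cocharacter :
    (ε[H] ≫ σ ≫ 𝒮) ⋆ (ε ≫ σ) = ε ≫ η := by
  have h := comp_convMul_of_anticomultiplicative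
    (counit_comp_anticomultiplicative (M := H) σ) 𝒮 (𝟙 H)
  rw [antipode_convMul_id] at h
  simpa using h.symm

end Cocharacter

section AntiYetterDrinfeld

variable {H : C} [CategoryTheory.HopfObj H]

/-- The anti-Yetter–Drinfeld composite `H ⟶ H` of the unit object, with action `δ` and coaction
`σ`: the right-hand side of the compatibility condition. -/
def antiYetterDrinfeldMap (δ : H ⟶ 𝟙_ C) (σ : 𝟙_ C ⟶ H) : H ⟶ H :=
  (λ_ H).inv ≫ (σ ⊗ₘ (Δ ≫ H ◁ Δ)) ≫ H ◁ H ◁ (β_ H H).hom ≫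
    (α_ H H (H ⊗ H)).inv ≫ (α_ (H ⊗ H) H H).inv ≫ (β_ (H ⊗ H) H).hom ▷ H ≫
    (((𝒮 ⊗ₘ μ) ≫ μ) ⊗ₘ δ) ≫ (ρ_ H).hom

theorem antiYetterDrinfeldMap_eq_coopConvMul (δ : H ⟶ 𝟙_ C) (σ : 𝟙_ C ⟶ H) :
    antiYetterDrinfeldMap δ σ = twistedAntipode δ ⋆ ((ε ≫ σ) ⋆ 𝟙 H) := by
  have tensorHom_translate : (σ ⊗ₘ (Δ ≫ H ◁ Δ)) ≫ H ◁ H ◁ ((β_ H H).hom ≫ H ◁ δ ≫ (ρ_ H).hom) =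
      σ ⊗ₘ (Δ ≫ H ◁ translate δ) := by
    rw [← id_tensorHom H (H ◁ _), tensorHom_comp_tensorHom, Category.comp_id, Category.assoc,
      ← whiskerLeft_comp, comul_braiding_whiskerLeft]
  calc
    _ = (λ_ H).inv ≫ (σ ⊗ₘ (Δ ≫ H ◁ Δ)) ≫ H ◁ H ◁ ((β_ H H).hom ≫ H ◁ δ ≫ (ρ_ H).hom) ≫
          (α_ H H H).inv ≫ (μ ⊗ₘ 𝒮) ≫ (β_ H H).hom ≫ μ := by
      rw [antiYetterDrinfeldMap, braiding_whiskerRight_comp_tensorHom,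
        reassoc_of% associator_inv_comp_rightUnitor]
      simp only [whiskerLeft_comp, Category.assoc]
    _ = Δ ≫ (((λ_ H).inv ≫ σ ▷ H ≫ μ) ⊗ₘ (translate δ ≫ 𝒮)) ≫ (β_ H H).hom ≫ μ := by
      rw [reassoc_of% tensorHom_translate,
        reassoc_of% leftUnitor_inv_comp_associator_inv, tensorHom_comp_tensorHom_assoc,
        Category.assoc]
    _ = twistedAntipode δ ⋆ ((ε ≫ σ) ⋆ 𝟙 H) := by
      rw [coopConvMul_def, counit_comp_coopConvMul, translate_antipode, tensorHom_id,
        BraidedCategory.braiding_naturality_assoc]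

end AntiYetterDrinfeld

section Equivalence

attribute [local instance] ComonObj.instTensorUnit

variable {H : C} [CategoryTheory.HopfObj H] (δ : H ⟶ 𝟙_ C) [IsMonHom δ] (σ : 𝟙_ C ⟶ H)

theorem character_comp_eq_coopConvMul :
    δ ≫ σ = twistedAntipode δ ⋆ ((twistedAntipode δ ≫ twistedAntipode δ) ⋆ (ε ≫ σ)) := by
  rw [← coopConvMul_assoc, twistedAntipode_coopConvMul_sq, comp_one_coopConvMul_counit_comp]

theorem comp_eq_antiYetterDrinfeldMap_iff [IsComonHom σ] :
    δ ≫ σ = antiYetterDrinfeldMap δ σ ↔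
      (ε ≫ σ ≫ 𝒮) ⋆ (twistedAntipode δ ≫ twistedAntipode δ) ⋆ (ε ≫ σ) = 𝟙 H := by
  obtain ⟨f, hf⟩ := exists_coopConvMul_twistedAntipode_eq_one δ
  rw [antiYetterDrinfeldMap_eq_coopConvMul, character_comp_eq_coopConvMul δ σ,
    coopConvMul_right_inj_of_eq_one hf,
    ← coopConvMul_right_inj_of_eq_one (cocharacter_coopConvMul_antipode σ),
    ← coopConvMul_assoc (_ ≫ _) (_ ≫ _) (𝟙 H), antipode_coopConvMul_cocharacter,
    one_coopConvMul, coopConvMul_assoc]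

end Equivalence

/-- The Hopf object structure, in the sense of Mathlib, on the underlying object of `A`. -/
abbrev hopfObjX (A : _root_.HopfObj C) : CategoryTheory.HopfObj A.X where
  mul := A.mul
  one := A.one
  comul := A.comul
  counit := A.counit
  antipode := A.antipode
  mul_assoc := A.mul_assoc
  one_mul := A.one_mul
  mul_one := A.mul_one
  comul_assoc := A.comul_assoc.symm
  counit_comul := A.counit_comul
  comul_counit := A.comul_counit
  mul_comul := by
    rw [A.mul_comul]
    simp [tensorμ]
  one_comul := A.one_comul
  mul_counit := A.mul_counit
  one_counit := A.one_counit
  antipode_left := A.antipode_left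
  antipode_right := A.antipode_right

end BraidedModularPair

/-- The unit object, with right action `δ` and left coaction `σ`, is a
braided stable anti-Yetter–Drinfeld module over `H` if and only if `(δ, σ)` is a braided
modular pair in involution. -/
theorem HopfObj.unit_sayd_iff_bmpi (A : _root_.HopfObj C) (δ : A.X ⟶ 𝟙_ C)
    (σ : 𝟙_ C ⟶ A.X) (hδ : A.IsCharacter δ) (hσ : A.IsCocharacter σ) :
    (σ ≫ δ = 𝟙 (𝟙_ C) ∧
        δ ≫ σ =
          (λ_ A.X).inv ≫ (σ ⊗ₘ (A.comul ≫ (A.X ◁ A.comul))) ≫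
            (A.X ◁ (A.X ◁ (β_ A.X A.X).hom)) ≫
            (α_ A.X A.X (A.X ⊗ A.X)).inv ≫ (α_ (A.X ⊗ A.X) A.X A.X).inv ≫
            ((β_ (A.X ⊗ A.X) A.X).hom ▷ A.X) ≫
            (((A.antipode ⊗ₘ A.mul) ≫ A.mul) ⊗ₘ δ) ≫ (ρ_ A.X).hom) ↔
      A.IsBMPI δ σ := by
  let _ := BraidedModularPair.hopfObjX A
  let _ := ComonObj.instTensorUnit C
  have : IsMonHom δ := ⟨hδ.2, hδ.1⟩
  have : IsComonHom σ := ⟨hσ.2, hσ.1⟩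
  refine and_congr_right fun _ => ?_
  have h := BraidedModularPair.comp_eq_antiYetterDrinfeldMap_iff δ σ
  rw [BraidedModularPair.counit_comp_coopConvMul_coopConvMul] at h
  exact h
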